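/- arXiv:2202.06775 — 2 statements merged into one kernel-verified Lean document; each statement's English description precedes it below -/
import Mathlib

section
/- Let a_0, a_1, b_0, b_1 ∈ ℝ² and define the bilinear interpolation X(s, t) = (1−t)((1−s) a_0 + s a_1) + t((1−s) b_0 + s b_1) for (s, t) ∈ [0,1]². Then ∫_0^1 ∫_0^1 det(∂_s X(s,t), ∂_t X(s,t)) dt ds = det( ((a_1 − a_0) + (b_1 − b_0))/2 , ((b_0 − a_0) + (b_1 − a_1))/2 ), where for u = (u_1, u_2), v = (v_1, v_2) ∈ ℝ² one sets det(u, v) = u_1 v_2 − u_2 v_1. -/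
/-!
Writing `X(s, t)` as an interpolation of interpolations, `∂ₛX` is affine in `t` alone and `∂ₜX` is
affine in `s` alone. An affine function integrates over `[0, 1]` to the midpoint of its end values,
so in the iterated integral of `B(∂ₛX, ∂ₜX)`, for any bilinear `B`, the `t`-integral averages the
first argument and the `s`-integral then averages the second.
-/

open AffineMap

section Interpolation

variable {R E : Type*} [AddCommGroup E]

/-- Bilinear interpolation of the four corners `a₀`, `a₁`, `b₀`, `b₁`: the point at parameter `s` of
the segment which, as the time `t` runs from `0` to `1`, moves linearly from `[a₀, a₁]` to
`[b₀, b₁]`. -/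
def bilinearInterp [Ring R] [Module R E] (a₀ a₁ b₀ b₁ : E) (s t : R) : E :=
  lineMap (lineMap a₀ a₁ s) (lineMap b₀ b₁ s) t

theorem bilinearInterp_apply [Ring R] [Module R E] (a₀ a₁ b₀ b₁ : E) (s t : R) :
    bilinearInterp a₀ a₁ b₀ b₁ s t =
      (1 - t) • ((1 - s) • a₀ + s • a₁) + t • ((1 - s) • b₀ + s • b₁) := by
  simp only [bilinearInterp, lineMap_apply_module]

theorem bilinearInterp_swap [CommRing R] [Module R E] (a₀ a₁ b₀ b₁ : E) (s t : R) :
    bilinearInterp a₀ a₁ b₀ b₁ s t = bilinearInterp a₀ b₀ a₁ b₁ t s := by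
  simp only [bilinearInterp_apply]
  module

end Interpolation

section Derivative

variable {𝕜 E : Type*} [NontriviallyNormedField 𝕜] [NormedAddCommGroup E] [NormedSpace 𝕜 E]

theorem hasDerivAt_bilinearInterp_right (a₀ a₁ b₀ b₁ : E) (s t : 𝕜) :
    HasDerivAt (fun t' => bilinearInterp a₀ a₁ b₀ b₁ s t') (lineMap (b₀ - a₀) (b₁ - a₁) s) t := by
  have edge_sub : lineMap b₀ b₁ s - lineMap a₀ a₁ s = lineMap (b₀ - a₀) (b₁ - a₁) s :=
    lineMap_vsub_lineMap b₀ b₁ a₀ a₁ s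
  exact edge_sub ▸ hasDerivAt_lineMap

theorem hasDerivAt_bilinearInterp_left (a₀ a₁ b₀ b₁ : E) (s t : 𝕜) :
    HasDerivAt (fun s' => bilinearInterp a₀ a₁ b₀ b₁ s' t) (lineMap (a₁ - a₀) (b₁ - b₀) t) s := by
  simp only [bilinearInterp_swap a₀ a₁]
  exact hasDerivAt_bilinearInterp_right a₀ b₀ a₁ b₁ t s

end Derivative

section Integral

variable {E F G : Type*} [AddCommGroup E] [Module ℝ E] [AddCommGroup F] [Module ℝ F]
  [NormedAddCommGroup G] [NormedSpace ℝ G] [CompleteSpace G]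

theorem integral_lineMap (x y : G) : ∫ t in (0 : ℝ)..1, lineMap x y t = midpoint ℝ x y := by
  have moment : ∫ t in (0 : ℝ)..1, t • (y - x) = (2 : ℝ)⁻¹ • (y - x) := by
    rw [intervalIntegral.integral_smul_const, integral_id]
    norm_num
  simp only [lineMap_apply_module']
  rw [intervalIntegral.integral_add (Continuous.intervalIntegrable (by fun_prop) _ _)
    intervalIntegrable_const, moment, intervalIntegral.integral_const, midpoint_eq_smul_add,
    invOf_eq_inv]
  module

theorem integral_map_lineMap (f : E →ₗ[ℝ] G) (x y : E) :
    ∫ t in (0 : ℝ)..1, f (lineMap x y t) = f (midpoint ℝ x y) := by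
  have map_lineMap (t : ℝ) : f (lineMap x y t) = lineMap (f x) (f y) t :=
    f.toAffineMap.apply_lineMap x y t
  have map_midpoint : f (midpoint ℝ x y) = midpoint ℝ (f x) (f y) :=
    f.toAffineMap.map_midpoint x y
  simp only [map_lineMap, integral_lineMap, map_midpoint]

theorem integral_integral_bilin_lineMap (B : E →ₗ[ℝ] F →ₗ[ℝ] G) (x y : E) (z w : F) :
    ∫ s in (0 : ℝ)..1, ∫ t in (0 : ℝ)..1, B (lineMap x y t) (lineMap z w s) =
      B (midpoint ℝ x y) (midpoint ℝ z w) := by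
  have inner_integral (v : F) :
      ∫ t in (0 : ℝ)..1, B (lineMap x y t) v = B (midpoint ℝ x y) v :=
    integral_map_lineMap (B.flip v) x y
  simp only [inner_integral, integral_map_lineMap]

end Integral

/-- The determinant `det(u, v) = u₁ v₂ - u₂ v₁` of two plane vectors, bundled as a bilinear form and
with `R × R` as the plane. -/
def planarDet (R : Type*) [CommRing R] : R × R →ₗ[R] R × R →ₗ[R] R :=
  (LinearMap.mul R R).compl₁₂ (LinearMap.fst R R R) (LinearMap.snd R R R) -
    (LinearMap.mul R R).compl₁₂ (LinearMap.snd R R R) (LinearMap.fst R R R)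

theorem planarDet_apply {R : Type*} [CommRing R] (u v : R × R) :
    planarDet R u v = u.1 * v.2 - u.2 * v.1 :=
  rfl

theorem stmt9_general {E G : Type*} [NormedAddCommGroup E] [NormedSpace ℝ E]
    [NormedAddCommGroup G] [NormedSpace ℝ G] [CompleteSpace G]
    (a₀ a₁ b₀ b₁ : E) (X : ℝ → ℝ → E)
    (hX : ∀ s t, X s t =
      (1 - t) • ((1 - s) • a₀ + s • a₁) + t • ((1 - s) • b₀ + s • b₁))
    (B : E →ₗ[ℝ] E →ₗ[ℝ] G) :
    (∫ s in (0 : ℝ)..1, ∫ t in (0 : ℝ)..1,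
        B (deriv (fun s' => X s' t) s) (deriv (fun t' => X s t') t)) =
      B ((2 : ℝ)⁻¹ • ((a₁ - a₀) + (b₁ - b₀))) ((2 : ℝ)⁻¹ • ((b₀ - a₀) + (b₁ - a₁))) := by
  obtain rfl : X = bilinearInterp a₀ a₁ b₀ b₁ :=
    funext₂ fun s t => (hX s t).trans (bilinearInterp_apply a₀ a₁ b₀ b₁ s t).symm
  simp only [(hasDerivAt_bilinearInterp_left a₀ a₁ b₀ b₁ _ _).deriv,
    (hasDerivAt_bilinearInterp_right a₀ a₁ b₀ b₁ _ _).deriv,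
    integral_integral_bilin_lineMap, midpoint_eq_smul_add, invOf_eq_inv]

/-- The signed area swept by a segment moving by linear interpolation from
`[a₀,a₁]` to `[b₀,b₁]` equals the determinant of the averaged edge vector with
the averaged displacement (per-element `d = 2` content of Lemma 3.1). -/
theorem stmt9 (a0 a1 b0 b1 : ℝ × ℝ)
    (X : ℝ → ℝ → ℝ × ℝ)
    (hX : ∀ s t, X s t =
      (1 - t) • ((1 - s) • a0 + s • a1) + t • ((1 - s) • b0 + s • b1))
    (det2 : ℝ × ℝ → ℝ × ℝ → ℝ)
    (hdet : ∀ u v : ℝ × ℝ, det2 u v = u.1 * v.2 - u.2 * v.1) :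
    (∫ s in (0:ℝ)..1, ∫ t in (0:ℝ)..1,
        det2 (deriv (fun s' => X s' t) s) (deriv (fun t' => X s t') t)) =
      det2 ((2:ℝ)⁻¹ • ((a1 - a0) + (b1 - b0))) ((2:ℝ)⁻¹ • ((b0 - a0) + (b1 - a1))) := by
  obtain rfl : det2 = fun u v => planarDet ℝ u v :=
    funext₂ fun u v => (hdet u v).trans (planarDet_apply u v).symm
  exact stmt9_general a0 a1 b0 b1 X hX (planarDet ℝ)
end

section
/- Let A and B be real 3×2 matrices such that Bᵀ B = I₂, the 2×2 identity matrix. Then tr(Aᵀ(A − B)) ≥ √(det(Aᵀ A)) − 1. -/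
open Matrix

/-!
In the Frobenius norm, `2⟨A, A - B⟩ = |A|² - |B|² + |A - B|² ≥ |A|² - |B|²`. Here `|A|²` is the sum
of the eigenvalues of `Aᴴ * A`, so AM-GM gives `|A|² ≥ n * det (Aᴴ * A) ^ (1 / n)` for `n` columns,
and orthonormality of the `n` columns of `B` gives `|B|² = n`.
-/

section

open scoped ComplexOrder

variable {𝕜 m n : Type*} [RCLike 𝕜] [Fintype m] [Fintype n]

lemma re_trace_conjTranspose_mul_self_sub_div_two_le (A B : Matrix m n 𝕜) :
    (RCLike.re (Aᴴ * A).trace - RCLike.re (Bᴴ * B).trace) / 2 ≤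
      RCLike.re (Aᴴ * (A - B)).trace := by
  have hsq : 0 ≤ RCLike.re ((A - B)ᴴ * (A - B)).trace :=
    (RCLike.nonneg_iff.mp (posSemidef_conjTranspose_mul_self (A - B)).trace_nonneg).1
  have hcross : RCLike.re (Bᴴ * A).trace = RCLike.re (Aᴴ * B).trace := by
    rw [← RCLike.conj_re, starRingEnd_apply, ← trace_conjTranspose, conjTranspose_mul,
      conjTranspose_conjTranspose]
  simp only [conjTranspose_sub, Matrix.sub_mul, Matrix.mul_sub, trace_sub, map_sub] at hsq ⊢
  linarith

variable [DecidableEq n] [Nonempty n]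

lemma re_det_rpow_inv_card_le_re_trace_div_card {M : Matrix n n 𝕜} (hM : M.PosSemidef) :
    RCLike.re M.det ^ (Fintype.card n : ℝ)⁻¹ ≤ RCLike.re M.trace / Fintype.card n := by
  have hdet : RCLike.re M.det = ∏ i, hM.isHermitian.eigenvalues i := by
    rw [hM.isHermitian.det_eq_prod_eigenvalues, ← RCLike.ofReal_prod, RCLike.ofReal_re]
  have htrace : RCLike.re M.trace = ∑ i, hM.isHermitian.eigenvalues i := by
    rw [hM.isHermitian.trace_eq_sum_eigenvalues, ← RCLike.ofReal_sum, RCLike.ofReal_re]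
  rw [hdet, htrace]
  simpa using Real.geom_mean_le_arith_mean Finset.univ (fun _ ↦ 1) hM.isHermitian.eigenvalues
    (fun _ _ ↦ zero_le_one) (by simp [Fintype.card_pos]) (fun i _ ↦ hM.eigenvalues_nonneg i)

theorem stmt12_general (A B : Matrix m n 𝕜) :
    (Fintype.card n * RCLike.re (Aᴴ * A).det ^ (Fintype.card n : ℝ)⁻¹ -
      RCLike.re (Bᴴ * B).trace) / 2 ≤ RCLike.re (Aᴴ * (A - B)).trace := by
  have hcard : (0 : ℝ) < Fintype.card n := mod_cast Fintype.card_pos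
  have hdet : Fintype.card n * RCLike.re (Aᴴ * A).det ^ (Fintype.card n : ℝ)⁻¹ ≤
      RCLike.re (Aᴴ * A).trace :=
    (le_div_iff₀' hcard).mp <|
      re_det_rpow_inv_card_le_re_trace_div_card (posSemidef_conjTranspose_mul_self A)
  calc
    _ ≤ (RCLike.re (Aᴴ * A).trace - RCLike.re (Bᴴ * B).trace) / 2 := by gcongr
    _ ≤ RCLike.re (Aᴴ * (A - B)).trace :=
      re_trace_conjTranspose_mul_self_sub_div_two_le A B

end

/-- Per-element form of the stability estimate (3.23): if `B` is a real `3×2`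
matrix with orthonormal columns (`BᵀB = I₂`) and `A` is any real `3×2` matrix,
then `tr(Aᵀ(A - B)) ≥ √(det(AᵀA)) - 1`. -/
theorem stmt12 (A B : Matrix (Fin 3) (Fin 2) ℝ) (hB : Bᵀ * B = 1) :
    Real.sqrt (Aᵀ * A).det - 1 ≤ (Aᵀ * (A - B)).trace := by
  simpa [conjTranspose_eq_transpose_of_trivial, hB, Real.sqrt_eq_rpow, sub_div] using
    stmt12_general A B
end
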